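/- Let 0 < p < q < ∞ and α > 1, and let f(z) = z. Then with r = √(p/q) one has (∫_𝔻 |rz|^q dA_α(z))^{1/q} ≤ (∫_𝔻 |z|^p dA_α(z))^{1/p}. -/

import Mathlib

open MeasureTheory Metric

/-- The weighted Bergman measure `dA_α` on the unit disk:
density `((α-1)/π)(1-|z|²)^(α-2)` with respect to Lebesgue area measure. -/
noncomputable def bergmanMeasure (α : ℝ) : Measure ℂ :=
  (volume.restrict (ball (0 : ℂ) 1)).withDensity
    (fun z => ENNReal.ofReal ((α - 1) / Real.pi * (1 - ‖z‖ ^ 2) ^ (α - 2)))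

/-!
The moments of `dA_α` are `∫ ‖z‖ ^ s = Γ(s/2 + 1) Γ(α) / Γ(s/2 + α)`. Since `√(p/q) = √p / √q`, the
claim says that `‖z‖_{L^s} / √s` decreases with `s`. Up to an additive constant, twice its logarithm
at `s = 2 x` is `h(x) / x`, where `h(x) = log ∫ ‖z‖ ^ (2 x) - x log x`. As `h(0) = 0`, it suffices
that `h` is concave on `[0, ∞)`. The term `-log Γ(x + α)` is concave because `Γ` is log-convex, and
`log Γ(x + 1) - x log x` is concave because, by Euler's limit formula and a telescoping expansion of
`x log x`, it is a pointwise limit of sums of an affine function, translates of `y log (1 + 1 / y)`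
and a translate of `-y log y`.
-/

open Set Filter Topology ProbabilityTheory

theorem concaveOn_of_tendsto {𝕜 E β ι : Type*} [Semiring 𝕜] [PartialOrder 𝕜] [AddCommMonoid E]
    [SMul 𝕜 E] [AddCommMonoid β] [PartialOrder β] [TopologicalSpace β] [OrderClosedTopology β]
    [ContinuousAdd β] [SMul 𝕜 β] [ContinuousConstSMul 𝕜 β] {s : Set E} {u : ι → E → β} {f : E → β}
    {l : Filter ι} [l.NeBot] (hs : Convex 𝕜 s) (hu : ∀ i, ConcaveOn 𝕜 s (u i))
    (hlim : ∀ x ∈ s, Tendsto (u · x) l (𝓝 (f x))) : ConcaveOn 𝕜 s f :=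
  ⟨hs, fun x hx y hy a b ha hb hab ↦ le_of_tendsto_of_tendsto'
    (((hlim x hx).const_smul a).add ((hlim y hy).const_smul b)) (hlim _ (hs hx hy ha hb hab))
    fun i ↦ (hu i).2 hx hy ha hb hab⟩

theorem concaveOn_Ici_comp_add_right {f : ℝ → ℝ} {a c : ℝ} (hf : ConcaveOn ℝ (Ici a) f)
    (hc : 0 ≤ c) : ConcaveOn ℝ (Ici a) fun x ↦ f (x + c) :=
  (hf.translate_left c).subset (fun _ hx ↦ le_add_of_nonneg_of_le hc hx) (convex_Ici a)

section Gamma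

open Real

theorem concaveOn_mul_log_add_one_sub_mul_log :
    ConcaveOn ℝ (Ici 0) fun x : ℝ ↦ x * log (x + 1) - x * log x := by
  refine concaveOn_of_hasDerivWithinAt2_nonpos (convex_Ici 0)
    (f' := fun x ↦ log (x + 1) + x / (x + 1) - (log x + 1))
    (f'' := fun x ↦ 1 / (x + 1) + 1 / (x + 1) ^ 2 - 1 / x) ?_ ?_ ?_ ?_
  · have hlog : ContinuousOn (fun x : ℝ ↦ log (x + 1)) (Ici 0) :=
      ContinuousOn.log (by fun_prop) fun x (hx : 0 ≤ x) ↦ by positivity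
    exact (continuousOn_id.mul hlog).sub continuous_mul_log.continuousOn
  all_goals
    rw [interior_Ici]
    intro x (hx : 0 < x)
    have hx1 : x + 1 ≠ 0 := by positivity
    have hadd : HasDerivAt (fun x : ℝ ↦ x + 1) 1 x := (hasDerivAt_id' x).add_const 1
  · exact (((hasDerivAt_id' x).mul (hadd.log hx1)).sub (hasDerivAt_mul_log hx.ne')).congr_deriv
      (by ring) |>.hasDerivWithinAt
  · exact (((hadd.log hx1).add ((hasDerivAt_id' x).div hadd hx1)).sub
      ((hasDerivAt_log hx.ne').add_const 1)).congr_deriv (by ring) |>.hasDerivWithinAt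
  · have : 1 / (x + 1) + 1 / (x + 1) ^ 2 - 1 / x = -(1 / (x * (x + 1) ^ 2)) := by
      field_simp
      ring
    rw [this]
    exact neg_nonpos.2 (by positivity)

theorem logGammaSeq_add_one_add_negMulLog (x : ℝ) (n : ℕ) :
    BohrMollerup.logGammaSeq (x + 1) n + negMulLog x =
      (x + 1) * log n + log n.factorial +
        ∑ m ∈ Finset.range (n + 1), ((x + m) * log (x + m + 1) - (x + m) * log (x + m)) +
        negMulLog (x + (n + 1 : ℕ)) := by
  have htel := Finset.sum_range_sub (fun m : ℕ ↦ (x + m) * log (x + m)) (n + 1)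
  have hterm (m : ℕ) : (x + m) * log (x + m + 1) - (x + m) * log (x + m) =
      ((x + (m + 1 : ℕ)) * log (x + (m + 1 : ℕ)) - (x + m) * log (x + m)) - log (x + 1 + m) := by
    push_cast
    ring_nf
  simp only [hterm, Finset.sum_sub_distrib (f := fun _ : ℕ ↦ _ - _), htel,
    BohrMollerup.logGammaSeq, negMulLog, Nat.cast_zero, add_zero]
  ring

theorem concaveOn_logGammaSeq_add_one_add_negMulLog (n : ℕ) :
    ConcaveOn ℝ (Ici 0) fun x ↦ BohrMollerup.logGammaSeq (x + 1) n + negMulLog x := by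
  simp only [logGammaSeq_add_one_add_negMulLog]
  have haffine : ConcaveOn ℝ (Ici 0) fun x : ℝ ↦ (x + 1) * log n + log n.factorial :=
    ⟨convex_Ici 0, fun x _ y _ a b _ _ hab ↦ le_of_eq <| by
      simp only [smul_eq_mul]
      linear_combination (log n + log n.factorial) * hab⟩
  have hsum : ConcaveOn ℝ (Ici 0) fun x : ℝ ↦ ∑ m ∈ Finset.range (n + 1),
      ((x + m) * log (x + m + 1) - (x + m) * log (x + m)) := by
    rw [← Finset.sum_fn]
    exact Finset.sum_induction _ (ConcaveOn ℝ (Ici 0)) (fun _ _ ↦ ConcaveOn.add)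
      (concaveOn_const 0 (convex_Ici 0)) fun m _ ↦
        concaveOn_Ici_comp_add_right concaveOn_mul_log_add_one_sub_mul_log m.cast_nonneg
  exact (haffine.add hsum).add
    (concaveOn_Ici_comp_add_right concaveOn_negMulLog (n + 1).cast_nonneg)

theorem concaveOn_log_Gamma_add_one_add_negMulLog :
    ConcaveOn ℝ (Ici 0) fun x ↦ log (Gamma (x + 1)) + negMulLog x :=
  concaveOn_of_tendsto (convex_Ici 0) concaveOn_logGammaSeq_add_one_add_negMulLog
    fun x (hx : 0 ≤ x) ↦ (BohrMollerup.tendsto_log_gamma (by positivity)).add_const _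

theorem integral_rpow_mul_one_sub_rpow_eq_beta {u v : ℝ} (hu : 0 < u) (hv : 0 < v) :
    ∫ x in Ioo (0 : ℝ) 1, x ^ (u - 1) * (1 - x) ^ (v - 1) = beta u v := by
  have hcast : ((∫ x in Ioo (0 : ℝ) 1, x ^ (u - 1) * (1 - x) ^ (v - 1) : ℝ) : ℂ) =
      Complex.betaIntegral u v := by
    rw [Complex.betaIntegral, intervalIntegral.integral_of_le zero_le_one,
      integral_Ioc_eq_integral_Ioo, ← integral_complex_ofReal]
    refine setIntegral_congr_fun measurableSet_Ioo fun x hx ↦ ?_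
    simp [Complex.ofReal_cpow hx.1.le, Complex.ofReal_cpow (sub_nonneg.2 hx.2.le)]
  rw [beta_eq_betaIntegralReal u v hu hv, ← hcast, Complex.ofReal_re]

end Gamma

section Radial

variable {E : Type*} [NormedAddCommGroup E] [NormedSpace ℝ E]

theorem integral_complex_comp_norm (f : ℝ → E) :
    ∫ z : ℂ, f ‖z‖ = Real.pi • ∫ t in Ioi (0 : ℝ), f √t := by
  have hvol : volume.real (ball (0 : ℂ) 1) = Real.pi := by simp [Measure.real]
  rw [integral_fun_norm_addHaar, hvol, Complex.finrank_real_complex,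
    ← integral_comp_rpow_Ioi_of_pos (g := fun t ↦ f √t) two_pos, smul_comm,
    ← Nat.cast_smul_eq_nsmul ℝ, ← integral_smul]
  congr 1
  refine setIntegral_congr_fun measurableSet_Ioi fun r (hr : 0 < r) ↦ ?_
  simp only [Real.rpow_two, Real.sqrt_sq hr.le]
  norm_num [smul_smul]

theorem setIntegral_ball_complex_comp_norm {R : ℝ} (hR : 0 < R) (f : ℝ → E) :
    ∫ z in ball (0 : ℂ) R, f ‖z‖ = Real.pi • ∫ t in Ioo 0 (R ^ 2), f √t := by
  have hball : (ball (0 : ℂ) R).indicator (fun z ↦ f ‖z‖) = fun z ↦ (Iio R).indicator f ‖z‖ := by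
    ext z
    simp [indicator]
  have hsqrt (t : ℝ) : (Iio R).indicator f √t = (Iio (R ^ 2)).indicator (fun t ↦ f √t) t := by
    simp [indicator, Real.sqrt_lt' hR]
  rw [← integral_indicator measurableSet_ball, hball, integral_complex_comp_norm]
  simp only [hsqrt, setIntegral_indicator measurableSet_Iio, Ioi_inter_Iio]

theorem integral_bergmanMeasure_comp_norm {α : ℝ} (hα : 1 ≤ α) (f : ℝ → E) :
    ∫ z, f ‖z‖ ∂bergmanMeasure α =
      (α - 1) • ∫ t in Ioo (0 : ℝ) 1, (1 - t) ^ (α - 2) • f √t := by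
  have hdensity (t : ℝ) (ht : t ∈ Ioo (0 : ℝ) 1) :
      (ENNReal.ofReal ((α - 1) / Real.pi * (1 - √t ^ 2) ^ (α - 2))).toReal =
        (α - 1) / Real.pi * (1 - t) ^ (α - 2) := by
    have hnonneg : 0 ≤ (α - 1) / Real.pi * (1 - t) ^ (α - 2) :=
      mul_nonneg (div_nonneg (sub_nonneg.2 hα) Real.pi_pos.le)
        (Real.rpow_nonneg (sub_nonneg.2 ht.2.le) _)
    rw [Real.sq_sqrt ht.1.le, ENNReal.toReal_ofReal hnonneg]
  rw [bergmanMeasure, integral_withDensity_eq_integral_toReal_smul (by fun_prop) (by simp),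
    setIntegral_ball_complex_comp_norm one_pos
      fun r ↦ (ENNReal.ofReal ((α - 1) / Real.pi * (1 - r ^ 2) ^ (α - 2))).toReal • f r,
    one_pow, ← integral_smul, ← integral_smul]
  refine setIntegral_congr_fun measurableSet_Ioo fun t ht ↦ ?_
  simp only [hdensity t ht, smul_smul]
  field_simp

end Radial

section Moments

open Real

variable {s x α : ℝ}

theorem integral_norm_rpow_bergmanMeasure_eq_beta (hs : -2 < s) (hα : 1 < α) :
    ∫ z, ‖z‖ ^ s ∂bergmanMeasure α = (α - 1) * beta (s / 2 + 1) (α - 1) := by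
  rw [integral_bergmanMeasure_comp_norm hα.le (· ^ s), smul_eq_mul,
    ← integral_rpow_mul_one_sub_rpow_eq_beta (by linarith) (by linarith)]
  congr 1
  refine setIntegral_congr_fun measurableSet_Ioo fun t ht ↦ ?_
  have hpow : √t ^ s = t ^ (s / 2 + 1 - 1) := by
    rw [sqrt_eq_rpow, ← rpow_mul ht.1.le]
    ring_nf
  have hexp : α - 1 - 1 = α - 2 := by ring
  simp only [smul_eq_mul, hpow, hexp, mul_comm]

theorem integral_norm_rpow_bergmanMeasure (hs : -2 < s) (hα : 1 < α) :
    ∫ z, ‖z‖ ^ s ∂bergmanMeasure α = Gamma (s / 2 + 1) * Gamma α / Gamma (s / 2 + α) := by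
  have hΓ : Gamma α = (α - 1) * Gamma (α - 1) := by
    rw [← Gamma_add_one (by linarith), sub_add_cancel]
  rw [integral_norm_rpow_bergmanMeasure_eq_beta hs hα, beta, hΓ, add_add_sub_cancel]
  ring

theorem integral_norm_rpow_bergmanMeasure_pos (hs : -2 < s) (hα : 1 < α) :
    0 < ∫ z, ‖z‖ ^ s ∂bergmanMeasure α := by
  rw [integral_norm_rpow_bergmanMeasure_eq_beta hs hα]
  exact mul_pos (by linarith) (beta_pos (by linarith) (by linarith))

theorem log_integral_norm_rpow_two_mul_bergmanMeasure (hx : -1 < x) (hα : 1 < α) :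
    log (∫ z, ‖z‖ ^ (2 * x) ∂bergmanMeasure α) =
      log (Gamma (x + 1)) + log (Gamma α) - log (Gamma (x + α)) := by
  have h1 : Gamma (x + 1) ≠ 0 := (Gamma_pos_of_pos (by linarith)).ne'
  have h2 : Gamma α ≠ 0 := (Gamma_pos_of_pos (by linarith)).ne'
  have h3 : Gamma (x + α) ≠ 0 := (Gamma_pos_of_pos (by linarith)).ne'
  rw [integral_norm_rpow_bergmanMeasure (by linarith) hα, mul_div_cancel_left₀ x two_ne_zero,
    log_div (mul_ne_zero h1 h2) h3, log_mul h1 h2]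

theorem concaveOn_log_integral_norm_rpow_add_negMulLog (hα : 1 < α) :
    ConcaveOn ℝ (Ici 0)
      fun x ↦ log (∫ z, ‖z‖ ^ (2 * x) ∂bergmanMeasure α) + negMulLog x := by
  have hden : ConvexOn ℝ (Ici 0) fun x ↦ log (Gamma (x + α)) :=
    (convexOn_log_Gamma.translate_left α).subset
      (fun x (hx : 0 ≤ x) ↦ show 0 < α + x by linarith) (convex_Ici 0)
  refine ((concaveOn_log_Gamma_add_one_add_negMulLog.sub hden).add_const (log (Gamma α))).congr
    fun x (hx : 0 ≤ x) ↦ ?_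
  simp only [Pi.add_apply, Pi.sub_apply,
    log_integral_norm_rpow_two_mul_bergmanMeasure (by linarith : -1 < x) hα]
  ring

theorem antitoneOn_rpow_integral_norm_rpow_div_sqrt (hα : 1 < α) :
    AntitoneOn (fun s ↦ (∫ z, ‖z‖ ^ s ∂bergmanMeasure α) ^ (1 / s) / √s) (Ioi 0) := by
  set h : ℝ → ℝ := fun x ↦ log (∫ z, ‖z‖ ^ (2 * x) ∂bergmanMeasure α) + negMulLog x with hh
  have h_zero : h 0 = 0 := by
    simp only [hh, log_integral_norm_rpow_two_mul_bergmanMeasure (by norm_num : (-1 : ℝ) < 0) hα]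
    simp
  have h_slope {s : ℝ} (hs : 0 < s) : slope h 0 (s / 2) =
      2 * log ((∫ z, ‖z‖ ^ s ∂bergmanMeasure α) ^ (1 / s) / √s) + log 2 := by
    have hM := integral_norm_rpow_bergmanMeasure_pos (by linarith : -2 < s) hα
    rw [log_div (by positivity) (by positivity), log_rpow hM, log_sqrt hs.le, slope_def_field,
      h_zero]
    simp only [hh, negMulLog, log_div hs.ne' two_ne_zero, mul_div_cancel₀ s two_ne_zero, sub_zero]
    field_simp
    ring
  intro p (hp : 0 < p) q (hq : 0 < q) hpq
  have hMp := integral_norm_rpow_bergmanMeasure_pos (by linarith : -2 < p) hα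
  have hMq := integral_norm_rpow_bergmanMeasure_pos (by linarith : -2 < q) hα
  have hanti : slope h 0 (q / 2) ≤ slope h 0 (p / 2) :=
    (concaveOn_log_integral_norm_rpow_add_negMulLog hα).antitoneOn_slope_gt self_mem_Ici
      ⟨(half_pos hp).le, half_pos hp⟩ ⟨(half_pos hq).le, half_pos hq⟩ (by linarith)
  rw [h_slope hp, h_slope hq] at hanti
  exact (log_le_log_iff (by positivity) (by positivity)).1 (by linarith)

end Moments

theorem rpow_integral_norm_mul_rpow {𝕜 : Type*} [NormedDivisionRing 𝕜] [MeasurableSpace 𝕜]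
    (μ : Measure 𝕜) (c : 𝕜) {q : ℝ} (hq : q ≠ 0) :
    (∫ z, ‖c * z‖ ^ q ∂μ) ^ (1 / q) = ‖c‖ * (∫ z, ‖z‖ ^ q ∂μ) ^ (1 / q) := by
  simp only [norm_mul, Real.mul_rpow (norm_nonneg _) (norm_nonneg _), integral_const_mul]
  rw [Real.mul_rpow (by positivity) (integral_nonneg fun z ↦ by positivity), one_div,
    Real.rpow_rpow_inv (norm_nonneg c) hq]

theorem hypercontractivity_for_identity_function
    (p q α : ℝ) (hp : 0 < p) (hpq : p < q) (hα : 1 < α) :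
    (∫ z, ‖(Real.sqrt (p / q) : ℂ) * z‖ ^ q ∂(bergmanMeasure α)) ^ (1 / q) ≤
      (∫ z, ‖z‖ ^ p ∂(bergmanMeasure α)) ^ (1 / p) := by
  have hq : 0 < q := hp.trans hpq
  have hanti := antitoneOn_rpow_integral_norm_rpow_div_sqrt hα hp hq hpq.le
  calc (∫ z, ‖(√(p / q) : ℂ) * z‖ ^ q ∂bergmanMeasure α) ^ (1 / q)
      = √p * ((∫ z, ‖z‖ ^ q ∂bergmanMeasure α) ^ (1 / q) / √q) := by
        rw [rpow_integral_norm_mul_rpow _ _ hq.ne', Complex.norm_of_nonneg (Real.sqrt_nonneg _),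
          Real.sqrt_div hp.le]
        ring
    _ ≤ √p * ((∫ z, ‖z‖ ^ p ∂bergmanMeasure α) ^ (1 / p) / √p) := by gcongr
    _ = (∫ z, ‖z‖ ^ p ∂bergmanMeasure α) ^ (1 / p) := mul_div_cancel₀ _ (by positivity)
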